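/- If an alternating Büchi automaton A satisfies the existential syntactic condition for a Boolean variable p — i.e., in every existential unfolding (V,E) of A and for every timestep i ∈ ℕ, not both (p,i) ∈ V and (¬p,i) ∈ V — then A is in existential normal form for p, i.e., L(∃°p.A) = L(∃p.A). -/

import Mathlib

/-!
The inclusion `L(∃p.A) ⊆ L(∃°p.A)` holds for every automaton: in a run of `A` on `t`, each
node resolves the disjunction `δ(q)[p↦1] ∨ δ(q)[p↦0]` by the value of `p` in the letter of `t`
read there, and cutting off the nodes labeled with `p`-literals yields a run on the projected
word (`existsLang_subset`).

For the converse, different nodes of a run of `∃°p.A` that carry the same state at the same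
timestep may resolve their choices differently, so a run tree need not describe an unfolding.
It is therefore first made positional (`exists_posStrat`). Acceptance says that the relation
"child of a non-accepting node" is well-founded on the tree, so nodes have ordinal ranks. At
`(q, i)`, play as a node of least rank among those labeled `q` at depth `i`. The least rank
then drops along every move out of a non-accepting state, so no play avoids the accepting
states from some point on.

A positional strategy for `∃°p.A` chooses a satisfying assignment of one of the two disjuncts
at each `(q, i)`. Adding the `p`-literal of that disjunct and shrinking to a minimal satisfying
assignment of `δ(q)` gives an existential unfolding of `A`. By the syntactic condition this
never contains both `p`-literals at one timestep, so `p` can be added to exactly those letters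
where the unfolding contains the literal `p`; on the resulting word the unfolding is a
positional winning strategy for `A`, and its tree of paths is an accepting run
(`PosStrat.mem_lang`).
-/

namespace ABAKC

/-- Positive Boolean formulas over variable type `α` (no negation). -/
inductive PosBool (α : Type) : Type
  | tt : PosBool α
  | ff : PosBool α
  | var : α → PosBool α
  | and : PosBool α → PosBool α → PosBool α
  | or : PosBool α → PosBool α → PosBool α

namespace PosBool

variable {α β : Type}

/-- Satisfaction of a positive Boolean formula by a set of variables. -/
def eval : PosBool α → Set α → Prop
  | .tt, _ => True
  | .ff, _ => False
  | .var a, X => a ∈ X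
  | .and f g, X => f.eval X ∧ g.eval X
  | .or f g, X => f.eval X ∨ g.eval X

/-- The minimal satisfying assignments of a positive Boolean formula. -/
def mSat (B : PosBool α) : Set (Set α) :=
  {X | B.eval X ∧ ∀ Y : Set α, Y ⊂ X → ¬ B.eval Y}

/-- Substitution of formulas for variables. -/
def bind : PosBool α → (α → PosBool β) → PosBool β
  | .tt, _ => .tt
  | .ff, _ => .ff
  | .var a, f => f a
  | .and g h, f => .and (g.bind f) (h.bind f)
  | .or g h, f => .or (g.bind f) (h.bind f)

end PosBool

/-- Finite disjunction. -/
def bigOr {α : Type} : List (PosBool α) → PosBool α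
  | [] => .ff
  | b :: l => .or b (bigOr l)

/-- Finite conjunction. -/
def bigAnd {α : Type} : List (PosBool α) → PosBool α
  | [] => .tt
  | b :: l => .and b (bigAnd l)

/-- Literals over the Boolean variables `V`: `(a, true)` is `a` and `(a, false)` is `¬a`. -/
abbrev Lit (V : Type) := V × Bool

/-- Infinite words over the alphabet `2^V`. -/
abbrev Word (V : Type) := ℕ → Set V

/-- An alternating Büchi automaton over Boolean variables `V` with state set `Q`:
transition formulas are positive Boolean formulas over states and literals. -/
structure ABA (V : Type) (Q : Type) where
  init : Q
  tr : Q → PosBool (Q ⊕ Lit V)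
  acc : Set Q

variable {V Q : Type}

/-- A literal holds in a letter `σ ⊆ V`. -/
def litHolds (σ : Set V) (l : Lit V) : Prop := l.1 ∈ σ ↔ l.2 = true

/-- A run of an alternating automaton on a word: a `(Q ⊕ Lit V)`-labeled tree whose root
is labeled with the initial state, such that the children labels of every state-labeled
node satisfy the state's transition formula, and literal labels are consistent with the word. -/
structure Run (A : ABA V Q) (w : Word V) where
  nodes : Set (List ℕ)
  label : List ℕ → Q ⊕ Lit V
  root_mem : [] ∈ nodes
  prefix_closed : ∀ {m n : List ℕ}, n ∈ nodes → m <+: n → m ∈ nodes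
  root_label : label [] = Sum.inl A.init
  step : ∀ n ∈ nodes, ∀ q : Q, label n = Sum.inl q →
    (A.tr q).eval {x | ∃ d : ℕ, n ++ [d] ∈ nodes ∧ label (n ++ [d]) = x}
  lit_ok : ∀ n ∈ nodes, ∀ l : Lit V, label n = Sum.inr l → litHolds (w (n.length - 1)) l

/-- A run is accepting if every infinite branch visits the acceptance set infinitely often. -/
def Run.Accepting {A : ABA V Q} {w : Word V} (ρ : Run A w) : Prop :=
  ∀ b : ℕ → ℕ, (∀ k : ℕ, (List.ofFn fun i : Fin k => b i) ∈ ρ.nodes) →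
    ∀ k : ℕ, ∃ j : ℕ, k ≤ j ∧ ∃ q ∈ A.acc,
      ρ.label (List.ofFn fun i : Fin j => b i) = Sum.inl q

/-- The language of an alternating Büchi automaton. -/
def ABA.lang (A : ABA V Q) : Set (Word V) := {w | ∃ ρ : Run A w, ρ.Accepting}

/-- A safety automaton: every state is accepting. -/
def ABA.Safety (A : ABA V Q) : Prop := A.acc = Set.univ

/-- Projection of a word onto `Σ ∖ {p}`. -/
def projWord (p : V) (t : Word V) : Word V := fun i => t i \ {p}

/-- The language of the automaton viewed over the alphabet `Σ ∖ {p}`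
(words never containing `p`). -/
def ABA.langWithout (A : ABA V Q) (p : V) : Set (Word V) :=
  {w | w ∈ A.lang ∧ ∀ i : ℕ, p ∉ w i}

/-- The existential quantification `∃p.A`: projections onto `Σ ∖ {p}` of words in `L(A)`. -/
def ABA.existsLang (A : ABA V Q) (p : V) : Set (Word V) :=
  {w | ∃ t ∈ A.lang, projWord p t = w}

/-- The universal quantification `∀p.A`: words over `Σ ∖ {p}` all of whose `p`-extensions
are in `L(A)`. -/
def ABA.forallLang (A : ABA V Q) (p : V) : Set (Word V) :=
  {w | (∀ i : ℕ, p ∉ w i) ∧ ∀ t : Word V, projWord p t = w → t ∈ A.lang}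

/-- Substitute the Boolean value `b` for the variable `p` in all `p`-literals of a
transition formula. -/
def substP [DecidableEq V] (p : V) (b : Bool) (B : PosBool (Q ⊕ Lit V)) :
    PosBool (Q ⊕ Lit V) :=
  B.bind fun x =>
    match x with
    | Sum.inl q => PosBool.var (Sum.inl q)
    | Sum.inr (a, c) =>
        if a = p then (if c = b then PosBool.tt else PosBool.ff)
        else PosBool.var (Sum.inr (a, c))

/-- State-wise existential quantification `∃°p.A`: replace each `δ(q)` by
`δ(q)[p↦1] ∨ δ(q)[p↦0]`. -/
def ABA.sExists [DecidableEq V] (A : ABA V Q) (p : V) : ABA V Q :=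
  { A with tr := fun q => PosBool.or (substP p true (A.tr q)) (substP p false (A.tr q)) }

/-- State-wise universal quantification `∀°p.A`: replace each `δ(q)` by
`δ(q)[p↦1] ∧ δ(q)[p↦0]`. -/
def ABA.sForall [DecidableEq V] (A : ABA V Q) (p : V) : ABA V Q :=
  { A with tr := fun q => PosBool.and (substP p true (A.tr q)) (substP p false (A.tr q)) }

/-- `A` is in existential normal form for `p`: the language of the state-wise existential
quantification (over the alphabet `Σ ∖ {p}`) equals the language of `∃p.A`. -/
def ExistentialNF [DecidableEq V] (A : ABA V Q) (p : V) : Prop :=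
  (A.sExists p).langWithout p = A.existsLang p

/-- `A` is in universal normal form for `p`: the language of the state-wise universal
quantification (over the alphabet `Σ ∖ {p}`) equals the language of `∀p.A`. -/
def UniversalNF [DecidableEq V] (A : ABA V Q) (p : V) : Prop :=
  (A.sForall p).langWithout p = A.forallLang p

/-- Projection of a transition formula to the states (literals replaced by `true`). -/
def projQ (B : PosBool (Q ⊕ Lit V)) : PosBool Q :=
  B.bind fun x =>
    match x with
    | Sum.inl q => PosBool.var q
    | Sum.inr _ => PosBool.tt

/-- A positive Boolean formula over states is (semantically) a disjunction of states. -/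
def IsDisjOfStates (B : PosBool Q) : Prop :=
  ∃ S : Set Q, ∀ X : Set Q, B.eval X ↔ ∃ q ∈ S, q ∈ X

/-- A positive Boolean formula over states is (semantically) a conjunction of states. -/
def IsConjOfStates (B : PosBool Q) : Prop :=
  ∃ S : Set Q, ∀ X : Set Q, B.eval X ↔ ∀ q ∈ S, q ∈ X

/-- `A` is nondeterministic: each transition formula, projected to the states,
is a disjunction of states. -/
def ABA.Nondet (A : ABA V Q) : Prop := ∀ q : Q, IsDisjOfStates (projQ (A.tr q))

/-- `A` is universal: each transition formula, projected to the states,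
is a conjunction of states. -/
def ABA.Universal (A : ABA V Q) : Prop := ∀ q : Q, IsConjOfStates (projQ (A.tr q))

/-- `A` is deterministic: both nondeterministic and universal. -/
def ABA.Deterministic (A : ABA V Q) : Prop := A.Nondet ∧ A.Universal

/-- Vertices of unfoldings: states or literals, paired with a timestep. -/
abbrev UVert (V Q : Type) := (Q ⊕ Lit V) × ℕ

/-- An existential unfolding of `A`: a DAG over `(Q ∪ L_Σ) × ℕ` rooted at `(q0, 0)`,
where every state vertex `(q, i)` has as successor set exactly `X × {i+1}` for one
chosen minimal satisfying assignment `X` of `δ(q)`, and every vertex is reachable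
from the root (smallest-sets condition). -/
structure ExUnfolding (A : ABA V Q) where
  verts : Set (UVert V Q)
  edges : Set (UVert V Q × UVert V Q)
  root_mem : (Sum.inl A.init, 0) ∈ verts
  edges_sub : ∀ e ∈ edges, e.1 ∈ verts ∧ e.2 ∈ verts
  edge_shape : ∀ e ∈ edges, (∃ q : Q, e.1.1 = Sum.inl q) ∧ e.2.2 = e.1.2 + 1
  succ : ∀ q : Q, ∀ i : ℕ, (Sum.inl q, i) ∈ verts →
    ∃ X ∈ (A.tr q).mSat,
      (∀ x ∈ X, (x, i + 1) ∈ verts ∧ ((Sum.inl q, i), (x, i + 1)) ∈ edges) ∧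
      (∀ u : UVert V Q, ((Sum.inl q, i), u) ∈ edges → u.2 = i + 1 ∧ u.1 ∈ X)
  minimal : ∀ v ∈ verts,
    Relation.ReflTransGen (fun a b => (a, b) ∈ edges) (Sum.inl A.init, 0) v

/-- Edge relation of an existential unfolding. -/
def ExUnfolding.edgeRel {A : ABA V Q} (U : ExUnfolding A) (a b : UVert V Q) : Prop :=
  (a, b) ∈ U.edges

/-- The existential syntactic condition for `p`: no existential unfolding contains both
`(p, i)` and `(¬p, i)` for any timestep `i`. -/
def ExSyntacticCond (A : ABA V Q) (p : V) : Prop :=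
  ∀ U : ExUnfolding A, ∀ i : ℕ,
    ¬ ((Sum.inr (p, true), i) ∈ U.verts ∧ (Sum.inr (p, false), i) ∈ U.verts)

/-- `X` covers the transition formula `B`: for every minimal satisfying assignment `X'`
of `B`, `X ∩ X' ∩ Q ≠ ∅` and `X' ∩ L_Σ ⊆ X`. -/
def Covers (B : PosBool (Q ⊕ Lit V)) (X : Set (Q ⊕ Lit V)) : Prop :=
  ∀ X' ∈ B.mSat,
    (∃ s : Q, Sum.inl s ∈ X ∧ Sum.inl s ∈ X') ∧
    ∀ l : Lit V, Sum.inr l ∈ X' → Sum.inr l ∈ X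

/-- A minimal covering set. -/
def MinCover (B : PosBool (Q ⊕ Lit V)) (X : Set (Q ⊕ Lit V)) : Prop :=
  Covers B X ∧ ∀ Y : Set (Q ⊕ Lit V), Y ⊂ X → ¬ Covers B Y

/-- A universal unfolding of `A`: a DAG over `(Q ∪ L_Σ) × ℕ` rooted at `(q0, 0)`,
where every state vertex `(q, i)` has as successor set exactly `X × {i+1}` for some
minimal set `X` that intersects every minimal satisfying assignment of `δ(q)` in a state
and contains all its literals, and every vertex is reachable from the root. -/
structure UnivUnfolding (A : ABA V Q) where
  verts : Set (UVert V Q)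
  edges : Set (UVert V Q × UVert V Q)
  root_mem : (Sum.inl A.init, 0) ∈ verts
  edges_sub : ∀ e ∈ edges, e.1 ∈ verts ∧ e.2 ∈ verts
  edge_shape : ∀ e ∈ edges, (∃ q : Q, e.1.1 = Sum.inl q) ∧ e.2.2 = e.1.2 + 1
  succ : ∀ q : Q, ∀ i : ℕ, (Sum.inl q, i) ∈ verts →
    ∃ X : Set (Q ⊕ Lit V), MinCover (A.tr q) X ∧
      (∀ x ∈ X, (x, i + 1) ∈ verts ∧ ((Sum.inl q, i), (x, i + 1)) ∈ edges) ∧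
      (∀ u : UVert V Q, ((Sum.inl q, i), u) ∈ edges → u.2 = i + 1 ∧ u.1 ∈ X)
  minimal : ∀ v ∈ verts,
    Relation.ReflTransGen (fun a b => (a, b) ∈ edges) (Sum.inl A.init, 0) v

/-- Edge relation of a universal unfolding. -/
def UnivUnfolding.edgeRel {A : ABA V Q} (U : UnivUnfolding A) (a b : UVert V Q) : Prop :=
  (a, b) ∈ U.edges

/-- The universal syntactic condition for `p`: no universal unfolding contains both
`(p, i)` and `(¬p, i)` for any timestep `i`. -/
def UnivSyntacticCond (A : ABA V Q) (p : V) : Prop :=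
  ∀ U : UnivUnfolding A, ∀ i : ℕ,
    ¬ ((Sum.inr (p, true), i) ∈ U.verts ∧ (Sum.inr (p, false), i) ∈ U.verts)

/-- `q` and `q'` are existentially in conflict for `p`. -/
def ExConflict (A : ABA V Q) (p : V) (q q' : Q) : Prop :=
  ∃ U : ExUnfolding A, ∃ i : ℕ,
    (Sum.inl q, i) ∈ U.verts ∧ (Sum.inl q', i) ∈ U.verts ∧
    ∃ i' : ℕ,
      Relation.ReflTransGen U.edgeRel (Sum.inl q, i) (Sum.inr (p, true), i') ∧
      Relation.ReflTransGen U.edgeRel (Sum.inl q', i) (Sum.inr (p, false), i')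

/-- `q` and `q'` are universally in conflict for `p`. -/
def UnivConflict (A : ABA V Q) (p : V) (q q' : Q) : Prop :=
  ∃ U : UnivUnfolding A, ∃ i : ℕ,
    (Sum.inl q, i) ∈ U.verts ∧ (Sum.inl q', i) ∈ U.verts ∧
    ∃ i' : ℕ,
      Relation.ReflTransGen U.edgeRel (Sum.inl q, i) (Sum.inr (p, true), i') ∧
      Relation.ReflTransGen U.edgeRel (Sum.inl q', i) (Sum.inr (p, false), i')

end ABAKC
namespace ABAKC

variable {V Q : Type}

/-! ### Conflict-detection automata -/

/-- Transition relation of the nondeterministic safety automaton deciding existential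
conflict of `q` and `q'`: from `(q1, q2, b)` to `(q1', q2', b')` whenever
`b' = b ∨ (q1 = q ∧ q2 = q')` and there is a set `X` containing `q1'` and `q2'` that is a
minimal satisfying assignment of both `δ(q1)` and `δ(q2)`. -/
def exConfStep (A : ABA V Q) (q q' : Q) (s s' : Q × Q × Bool) : Prop :=
  (s'.2.2 = true ↔ (s.2.2 = true ∨ (s.1 = q ∧ s.2.1 = q'))) ∧
  ∃ X : Set (Q ⊕ Lit V), Sum.inl s'.1 ∈ X ∧ Sum.inl s'.2.1 ∈ X ∧
    X ∈ (A.tr s.1).mSat ∧ X ∈ (A.tr s.2.1).mSat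

/-- Nonemptiness of the existential-conflict automaton: some finite run from
`(q0, q0, false)` reaches, with flag `true`, an accepting target `(p, ¬p, true)` or
`(¬p, p, true)`, i.e., a common minimal satisfying assignment containing both
`p`-literals. -/
def exConfAutNonempty (A : ABA V Q) (q q' : Q) (p : V) : Prop :=
  ∃ (n : ℕ) (σ : ℕ → Q × Q × Bool),
    σ 0 = (A.init, A.init, false) ∧
    (∀ k < n, exConfStep A q q' (σ k) (σ (k + 1))) ∧
    ((σ n).2.2 = true ∨ ((σ n).1 = q ∧ (σ n).2.1 = q')) ∧
    ∃ X : Set (Q ⊕ Lit V),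
      X ∈ (A.tr (σ n).1).mSat ∧ X ∈ (A.tr (σ n).2.1).mSat ∧
      Sum.inr (p, true) ∈ X ∧ Sum.inr (p, false) ∈ X

/-- Transition relation of the nondeterministic safety automaton deciding universal
conflict of `q` and `q'`: as in the existential case, but `q1'` and `q2'` may come from
two different minimal satisfying assignments `X` and `X'`. -/
def univConfStep (A : ABA V Q) (q q' : Q) (s s' : Q × Q × Bool) : Prop :=
  (s'.2.2 = true ↔ (s.2.2 = true ∨ (s.1 = q ∧ s.2.1 = q'))) ∧
  ∃ X X' : Set (Q ⊕ Lit V), Sum.inl s'.1 ∈ X ∧ Sum.inl s'.2.1 ∈ X' ∧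
    X ∈ (A.tr s.1).mSat ∧ X' ∈ (A.tr s.2.1).mSat

/-- Nonemptiness of the universal-conflict automaton. -/
def univConfAutNonempty (A : ABA V Q) (q q' : Q) (p : V) : Prop :=
  ∃ (n : ℕ) (σ : ℕ → Q × Q × Bool),
    σ 0 = (A.init, A.init, false) ∧
    (∀ k < n, univConfStep A q q' (σ k) (σ (k + 1))) ∧
    ((σ n).2.2 = true ∨ ((σ n).1 = q ∧ (σ n).2.1 = q')) ∧
    ∃ X X' : Set (Q ⊕ Lit V),
      X ∈ (A.tr (σ n).1).mSat ∧ X' ∈ (A.tr (σ n).2.1).mSat ∧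
      ((Sum.inr (p, true) ∈ X ∧ Sum.inr (p, false) ∈ X') ∨
       (Sum.inr (p, false) ∈ X ∧ Sum.inr (p, true) ∈ X'))

/-! ### Compilation constructions -/

/-- Macro-states: subsets of the conflict set `M`. -/
abbrev MacroState [DecidableEq Q] (M : Finset Q) := {X : Finset Q // X ⊆ M}

/-- State space of the compiled automata: `2^M ∪ (Q ∖ M)`. -/
abbrev CompState [DecidableEq Q] (M : Finset Q) := MacroState M ⊕ {a : Q // a ∉ M}

/-- The substitution `δ(q)[X'↦1, M∖X'↦0]`, re-targeting the remaining state variables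
(which lie outside `M`) to the compiled state space. -/
def compSubst [DecidableEq Q] (M X' : Finset Q) (B : PosBool (Q ⊕ Lit V)) :
    PosBool (CompState M ⊕ Lit V) :=
  B.bind fun x =>
    match x with
    | Sum.inl s =>
        if s ∈ X' then PosBool.tt
        else if h : s ∈ M then PosBool.ff
        else PosBool.var (Sum.inl (Sum.inr ⟨s, h⟩))
    | Sum.inr l => PosBool.var (Sum.inr l)

/-- The macro-state variable corresponding to `X' ⊆ M`. -/
def macroVar [DecidableEq Q] (M : Finset Q) (X' : {Y : Finset Q // Y ∈ M.powerset}) :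
    PosBool (CompState M ⊕ Lit V) :=
  PosBool.var (Sum.inl (Sum.inl ⟨X'.1, Finset.mem_powerset.mp X'.2⟩))

/-- The existential compilation of `A` with respect to `M ⊆ Q`: a safety automaton with
states `2^M ∪ (Q∖M)`, `δ'(q) = ⋁_{X'⊆M} (X' ∧ δ(q)[X'↦1, M∖X'↦0])` for `q ∈ Q∖M`, and
`δ'(X) = ⋁_{X'⊆M} (X' ∧ ⋀_{q∈X} δ(q)[X'↦1, M∖X'↦0])` for macro-states `X ⊆ M`. -/
noncomputable def exCompile [DecidableEq Q] (A : ABA V Q) (M : Finset Q) : ABA V (CompState M) where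
  init :=
    if h : A.init ∈ M then Sum.inl ⟨{A.init}, Finset.singleton_subset_iff.mpr h⟩
    else Sum.inr ⟨A.init, h⟩
  tr := fun s =>
    bigOr (M.powerset.attach.toList.map fun X' =>
      PosBool.and (macroVar M X')
        (match s with
          | Sum.inr a => compSubst M X'.1 (A.tr a.1)
          | Sum.inl X => bigAnd (X.1.toList.map fun b => compSubst M X'.1 (A.tr b))))
  acc := Set.univ

/-- The universal compilation of `A` with respect to `M ⊆ Q`: a safety automaton with
states `2^M ∪ (Q∖M)`, `δ'(q) = ⋀_{X'⊆M} (X' ∧ δ(q)[X'↦1, M∖X'↦0])` for `q ∈ Q∖M`, and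
`δ'(X) = ⋀_{X'⊆M} (X' ∧ ⋁_{q∈X} δ(q)[X'↦1, M∖X'↦0])` for macro-states `X ⊆ M`. -/
noncomputable def univCompile [DecidableEq Q] (A : ABA V Q) (M : Finset Q) : ABA V (CompState M) where
  init :=
    if h : A.init ∈ M then Sum.inl ⟨{A.init}, Finset.singleton_subset_iff.mpr h⟩
    else Sum.inr ⟨A.init, h⟩
  tr := fun s =>
    bigAnd (M.powerset.attach.toList.map fun X' =>
      PosBool.and (macroVar M X')
        (match s with
          | Sum.inr a => compSubst M X'.1 (A.tr a.1)
          | Sum.inl X => bigOr (X.1.toList.map fun b => compSubst M X'.1 (A.tr b))))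
  acc := Set.univ

/-- `M` over-approximates the states existentially in conflict for `p`:
every state in an existential conflict lies in `M`. -/
def ExOverApprox (A : ABA V Q) (p : V) (M : Finset Q) : Prop :=
  ∀ q q' : Q, ExConflict A p q q' → q ∈ M ∧ q' ∈ M

/-- `M` over-approximates the states universally in conflict for `p`. -/
def UnivOverApprox (A : ABA V Q) (p : V) (M : Finset Q) : Prop :=
  ∀ q q' : Q, UnivConflict A p q q' → q ∈ M ∧ q' ∈ M

/-- A run whose state-labeled nodes have children labels forming a *minimal* satisfying
assignment of the transition formula. -/
structure MinRun (A : ABA V Q) (w : Word V) extends Run A w where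
  min_step : ∀ n ∈ nodes, ∀ q : Q, label n = Sum.inl q →
    {x | ∃ d : ℕ, n ++ [d] ∈ nodes ∧ label (n ++ [d]) = x} ∈ (A.tr q).mSat

/-! ### Fixpoint labelings -/

/-- `post(q)`: the state parts of the minimal satisfying assignments of `δ(q)`. -/
def statePost (A : ABA V Q) (q : Q) : Set (Set Q) :=
  {Y | ∃ X ∈ (A.tr q).mSat, Y = {s : Q | Sum.inl s ∈ X}}

/-- The `p`-literals appearing in some minimal satisfying assignment of `δ(q)`,
i.e., `l(q) ∩ L_{p}`. -/
def pLits (A : ABA V Q) (p : V) (q : Q) : Set (Lit V) :=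
  {l | l.1 = p ∧ ∃ X ∈ (A.tr q).mSat, Sum.inr l ∈ X}

/-- One step of the successor relation on states induced by `post`. -/
def stepRel (A : ABA V Q) (a b : Q) : Prop := ∃ X ∈ statePost A a, b ∈ X

/-- Reachability between states along `post`. -/
def stateReach (A : ABA V Q) (a b : Q) : Prop := Relation.ReflTransGen (stepRel A) a b

/-- The labeling of the existential conflict fixpoint algorithm:
`l[q,0] = { l(q) ∩ L_{p} }` and
`l[q,i] = ⋃_{X ∈ post(q)} { ⋃_{q'∈X} ⋃_{u ∈ l[q',i−1]} u }`. -/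
def exLabel (A : ABA V Q) (p : V) : ℕ → Q → Set (Set (Lit V))
  | 0, q => {pLits A p q}
  | i + 1, q => {S | ∃ X ∈ statePost A q, S = ⋃ q' ∈ X, ⋃ u ∈ exLabel A p i q', u}

/-- The labeling of the universal conflict fixpoint algorithm:
`l[q,0] = { l(q) ∩ L_{p} }` and
`l[q,i] = { ⋃_{X ∈ post(q)} ⋃_{q'∈X} ⋃_{u ∈ l[q',i−1]} u }`. -/
def univLabel (A : ABA V Q) (p : V) : ℕ → Q → Set (Set (Lit V))
  | 0, q => {pLits A p q}
  | i + 1, q => {⋃ X ∈ statePost A q, ⋃ q' ∈ X, ⋃ u ∈ univLabel A p i q', u}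

/-- The conflict set returned by the existential fixpoint algorithm: all states added
(at some iteration) because two conjunctive successors `q', q''` in a common
`X ∈ post(q)` carried different labels, together with everything they reach. -/
def exConfs (A : ABA V Q) (p : V) : Set Q :=
  {s | ∃ i : ℕ, ∃ q : Q, ∃ X ∈ statePost A q, ∃ q' ∈ X, ∃ q'' ∈ X,
    exLabel A p i q' ≠ exLabel A p i q'' ∧
    (s = q' ∨ s = q'' ∨ stateReach A q' s ∨ stateReach A q'' s)}

/-- The conflict set returned by the universal fixpoint algorithm: all states added
(at some iteration) because two disjunctive successors `q' ∈ X`, `q'' ∈ X'` of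
distinct `X, X' ∈ post(q)` carried different labels, together with everything they
reach. -/
def univConfs (A : ABA V Q) (p : V) : Set Q :=
  {s | ∃ i : ℕ, ∃ q : Q, ∃ X ∈ statePost A q, ∃ X' ∈ statePost A q,
    ∃ q' ∈ X, ∃ q'' ∈ X',
    univLabel A p i q' ≠ univLabel A p i q'' ∧
    (s = q' ∨ s = q'' ∨ stateReach A q' s ∨ stateReach A q'' s)}

end ABAKC

namespace ABAKC

/-! ### Satisfying assignments and substitution -/

/-- Finiteness of the variable set guarantees that a minimal satisfying subset exists. -/
theorem exists_mSat_subset {α : Type} [Finite α] (B : PosBool α) (X : Set α) (hX : B.eval X) :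
    ∃ Y ⊆ X, Y ∈ B.mSat := by
  obtain ⟨Y, hY, hmin⟩ := exists_minimal_le_of_wellFoundedLT (fun Z => B.eval Z) X hX
  exact ⟨Y, hY, hmin.prop, fun Z hZ he => hZ.2 (hmin.2 he hZ.1)⟩

/-- An assignment whose `p`-literals all have value `b` may drop them after `p` is replaced
by `b`. -/
theorem eval_substP_of_eval {V Q : Type} [DecidableEq V] (p : V) (b : Bool)
    (B : PosBool (Q ⊕ Lit V)) (X : Set (Q ⊕ Lit V))
    (hb : ∀ c, Sum.inr (p, c) ∈ X → c = b) (hX : B.eval X) :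
    (substP p b B).eval {x ∈ X | ∀ c, x ≠ Sum.inr (p, c)} := by
  induction B with
  | tt => trivial
  | ff => exact hX
  | and f g hf hg => exact ⟨hf hX.1, hg hX.2⟩
  | or f g hf hg => exact hX.imp hf hg
  | var x =>
    change x ∈ X at hX
    rcases x with q | ⟨a, c⟩
    · exact ⟨hX, by simp⟩
    · by_cases ha : a = p
      · subst ha
        have hc := hb c hX
        simp [substP, PosBool.bind, hc, PosBool.eval]
      · simp [substP, PosBool.bind, ha, PosBool.eval, hX]

/-- Conversely, a satisfying assignment after the substitution `p ↦ b` becomes one of the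
original formula once the literal of `p` with value `b` is added; other `p`-literals are not
needed. -/
theorem eval_of_eval_substP {V Q : Type} [DecidableEq V] (p : V) (b : Bool)
    (B : PosBool (Q ⊕ Lit V)) (X : Set (Q ⊕ Lit V)) (hX : (substP p b B).eval X) :
    B.eval ({x ∈ X | ∀ c, x ≠ Sum.inr (p, c)} ∪ {Sum.inr (p, b)}) := by
  induction B with
  | tt => trivial
  | ff => exact hX
  | and f g hf hg => exact ⟨hf hX.1, hg hX.2⟩
  | or f g hf hg => exact hX.imp hf hg
  | var x =>
    rcases x with q | ⟨a, c⟩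
    · exact Or.inl ⟨hX, by simp⟩
    · by_cases ha : a = p
      · subst ha
        by_cases hc : c = b
        · exact Or.inr (by simp [hc])
        · simp [substP, PosBool.bind, hc, PosBool.eval] at hX
      · simp only [substP, PosBool.bind, ha, if_false, PosBool.eval] at hX
        exact Or.inl ⟨hX, by simp [ha]⟩

/-! ### The inclusion valid for every automaton -/

theorem existsLang_subset {V Q : Type} [DecidableEq V] (A : ABA V Q) (p : V) :
    A.existsLang p ⊆ (A.sExists p).langWithout p := by
  rintro w ⟨t, ⟨ρ, hρ⟩, rfl⟩
  refine ⟨⟨{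
    nodes := {n | n ∈ ρ.nodes ∧ ∀ m, m <+: n → ∀ c, ρ.label m ≠ Sum.inr (p, c)}
    label := ρ.label
    root_mem := ⟨ρ.root_mem, fun m hm c => by
      rw [List.prefix_nil.mp hm, ρ.root_label]; simp⟩
    prefix_closed := fun {m n} hn hm =>
      ⟨ρ.prefix_closed hn.1 hm, fun k hk => hn.2 k (hk.trans hm)⟩
    root_label := ρ.root_label
    step := ?_
    lit_ok := ?_ }, ?_⟩, ?_⟩
  · intro n hn q hq
    have hstep := ρ.step n hn.1 q hq
    have key : ∀ b : Bool, (b = true ↔ p ∈ t n.length) →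
        (substP p b (A.tr q)).eval {x | ∃ d : ℕ,
          (n ++ [d] ∈ ρ.nodes ∧ ∀ m, m <+: n ++ [d] → ∀ c, ρ.label m ≠ Sum.inr (p, c)) ∧
            ρ.label (n ++ [d]) = x} := by
      intro b hb
      have := eval_substP_of_eval p b _ _ (fun c => ?_) hstep
      · convert this using 2
        ext x
        constructor
        · rintro ⟨d, ⟨h1, h2⟩, rfl⟩
          exact ⟨⟨d, h1, rfl⟩, h2 _ (List.prefix_refl _)⟩
        · rintro ⟨⟨d, h1, rfl⟩, h2⟩
          refine ⟨d, ⟨h1, fun m hm => ?_⟩, rfl⟩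
          rcases List.prefix_concat_iff.mp hm with rfl | hm
          · exact h2
          · exact hn.2 m hm
      · rintro ⟨d, h1, h2⟩
        have h3 := ρ.lit_ok _ h1 _ h2
        simp only [litHolds, List.length_append, List.length_singleton,
          Nat.add_sub_cancel] at h3
        rw [← hb] at h3
        cases b <;> cases c <;> simp_all
    by_cases hp : p ∈ t n.length
    · exact Or.inl (key true (by simp [hp]))
    · exact Or.inr (key false (by simp [hp]))
  · rintro n hn ⟨a, c⟩ hl
    have h1 := ρ.lit_ok n hn.1 _ hl
    have ha : a ≠ p := by
      rintro rfl
      exact hn.2 n (List.prefix_refl _) c hl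
    simpa [litHolds, projWord, ha] using h1
  · intro b hb k
    exact hρ b (fun k => (hb k).1) k
  · intro i
    simp [projWord]

/-! ### Positional strategies -/

/-- A positional winning strategy of `A` on `w` in the acceptance game with positions
`Q × ℕ`: on a winning region `win` containing the initial position, `move q i` is the chosen
satisfying assignment at `(q, i)`. The Büchi condition is witnessed by an ordinal rank that
decreases along every move out of a non-accepting state. -/
structure PosStrat {V Q : Type} (A : ABA V Q) (w : Word V) where
  win : Q → ℕ → Prop
  move : Q → ℕ → Set (Q ⊕ Lit V)
  rk : Q → ℕ → Ordinal.{0}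
  init : win A.init 0
  sat : ∀ q i, win q i → (A.tr q).eval (move q i)
  lit : ∀ q i, win q i → ∀ l, Sum.inr l ∈ move q i → litHolds (w i) l
  next : ∀ q i, win q i → ∀ q', Sum.inl q' ∈ move q i → win q' (i + 1)
  rk_lt : ∀ q i, win q i → ∀ q', Sum.inl q' ∈ move q i → q ∉ A.acc → rk q' (i + 1) < rk q i

/-- The relation "`m` is a child of the non-accepting node `n`" on the nodes of a run. -/
def Run.badChild {V Q : Type} {A : ABA V Q} {w : Word V} (ρ : Run A w) (m n : List ℕ) : Prop :=
  m ∈ ρ.nodes ∧ n ∈ ρ.nodes ∧ (∃ d, m = n ++ [d]) ∧ ¬ ∃ q ∈ A.acc, ρ.label n = Sum.inl q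

theorem Run.Accepting.wf_badChild {V Q : Type} {A : ABA V Q} {w : Word V} {ρ : Run A w}
    (hρ : ρ.Accepting) : WellFounded ρ.badChild := by
  rw [wellFounded_iff_isEmpty_descending_chain]
  refine ⟨fun ⟨f, hf⟩ => ?_⟩
  choose d hd using fun k => (hf k).2.2.1
  set L := (f 0).length with hL
  -- The chain starts at depth `L`; its branch follows the node `f 0` down to that depth.
  let b : ℕ → ℕ := fun i => if i < L then (f 0).getD i 0 else d (i - L)
  have hb : ∀ k, (List.ofFn fun i : Fin (L + k) => b i) = f k := by
    intro k
    induction k with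
    | zero =>
      apply List.ext_getElem
      · simp [hL]
      · intro i h1 h2
        simp [b, List.getElem?_eq_getElem h2]
    | succ k ih =>
      rw [hd k, ← ih]
      change (List.ofFn fun i : Fin ((L + k) + 1) => b i) = _
      rw [List.ofFn_succ', List.concat_eq_append]
      simp [b]
  have hnodes : ∀ k, (List.ofFn fun i : Fin k => b i) ∈ ρ.nodes := by
    intro k
    refine ρ.prefix_closed (hf k).2.1 (?_ : _ <+: f k)
    rw [← hb k, List.prefix_iff_eq_take]
    apply List.ext_getElem
    · simp
    · intro i h1 h2
      simp
  obtain ⟨j, hj, q, hq, hlab⟩ := hρ b hnodes L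
  obtain ⟨k, rfl⟩ := Nat.exists_eq_add_of_le hj
  rw [hb k] at hlab
  exact (hf k).2.2.2 ⟨q, hq, hlab⟩

/-- Positional determinacy in the form needed: at `(q, i)` imitate a node of least rank among
those labeled `q` at depth `i`. -/
theorem exists_posStrat {V Q : Type} (A : ABA V Q) (w : Word V) (hw : w ∈ A.lang) :
    Nonempty (PosStrat A w) := by
  classical
  obtain ⟨ρ, hρ⟩ := hw
  have : IsWellFounded _ ρ.badChild := ⟨hρ.wf_badChild⟩
  let N : Q → ℕ → Set (List ℕ) := fun q i =>
    {n | n ∈ ρ.nodes ∧ n.length = i ∧ ρ.label n = Sum.inl q}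
  have hmin : ∀ q i, ∃ n, (N q i).Nonempty → n ∈ N q i ∧
      ∀ m ∈ N q i, IsWellFounded.rank ρ.badChild n ≤ IsWellFounded.rank ρ.badChild m := by
    intro q i
    by_cases hne : (N q i).Nonempty
    · obtain ⟨n, hn, hmin⟩ := exists_minimalFor_of_wellFoundedLT (· ∈ N q i)
        (IsWellFounded.rank ρ.badChild) hne
      refine ⟨n, fun _ => ⟨hn, fun m hm => ?_⟩⟩
      rcases le_total (IsWellFounded.rank ρ.badChild n) (IsWellFounded.rank ρ.badChild m)
        with h | h
      · exact h
      · exact hmin hm h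
    · exact ⟨[], fun h => absurd h hne⟩
  choose node hnode using hmin
  have hchild : ∀ q i, (N q i).Nonempty → ∀ q' d, node q i ++ [d] ∈ ρ.nodes →
      ρ.label (node q i ++ [d]) = Sum.inl q' → node q i ++ [d] ∈ N q' (i + 1) := by
    intro q i hne q' d h1 h2
    exact ⟨h1, by simp [(hnode q i hne).1.2.1], h2⟩
  refine ⟨{
    win := fun q i => (N q i).Nonempty
    move := fun q i => {x | ∃ d : ℕ, node q i ++ [d] ∈ ρ.nodes ∧ ρ.label (node q i ++ [d]) = x}
    rk := fun q i => IsWellFounded.rank ρ.badChild (node q i)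
    init := ⟨[], ρ.root_mem, rfl, ρ.root_label⟩
    sat := fun q i hne => ρ.step _ (hnode q i hne).1.1 q (hnode q i hne).1.2.2
    lit := ?_
    next := ?_
    rk_lt := ?_ }⟩
  · rintro q i hne l ⟨d, h1, h2⟩
    simpa [(hnode q i hne).1.2.1] using ρ.lit_ok _ h1 l h2
  · rintro q i hne q' ⟨d, h1, h2⟩
    exact ⟨_, hchild q i hne q' d h1 h2⟩
  · rintro q i hne q' ⟨d, h1, h2⟩ hq
    have hm := hchild q i hne q' d h1 h2
    refine ((hnode q' (i + 1) ⟨_, hm⟩).2 _ hm).trans_lt (IsWellFounded.rank_lt_of_rel ?_)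
    refine ⟨h1, (hnode q i hne).1.1, ⟨d, rfl⟩, ?_⟩
    rintro ⟨s, hs, hl⟩
    rw [(hnode q i hne).1.2.2] at hl
    exact hq (Sum.inl.inj hl ▸ hs)

/-- The paths of a positional winning strategy form an accepting run. Countability is needed
because run trees are trees of lists of natural numbers, so that the labels of children must be
coded by numbers. -/
theorem PosStrat.mem_lang {V Q : Type} [Countable V] [Countable Q] {A : ABA V Q} {w : Word V}
    (S : PosStrat A w) : w ∈ A.lang := by
  have : Nonempty (Q ⊕ Lit V) := ⟨Sum.inl A.init⟩
  obtain ⟨dec, hdec⟩ := exists_surjective_nat (Q ⊕ Lit V)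
  let label : List ℕ → Q ⊕ Lit V := fun n => (n.getLast?.map dec).getD (Sum.inl A.init)
  have label_snoc : ∀ n d, label (n ++ [d]) = dec d := fun n d => by simp [label]
  let nodes : Set (List ℕ) := {n | ∀ m d, m ++ [d] <+: n →
    ∃ q, label m = Sum.inl q ∧ dec d ∈ S.move q m.length}
  have closed : ∀ {m n : List ℕ}, n ∈ nodes → m <+: n → m ∈ nodes :=
    fun hn hm k d hk => hn k d (hk.trans hm)
  have snoc : ∀ n d, n ++ [d] ∈ nodes ↔
      n ∈ nodes ∧ ∃ q, label n = Sum.inl q ∧ dec d ∈ S.move q n.length := by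
    intro n d
    constructor
    · exact fun h => ⟨closed h (List.prefix_append _ _), h n d (List.prefix_refl _)⟩
    · rintro ⟨h1, h2⟩ m e hm
      rcases List.prefix_concat_iff.mp hm with he | hm
      · obtain ⟨rfl, he⟩ := List.append_inj' he rfl
        obtain rfl : e = d := by simpa using he
        exact h2
      · exact h1 m e hm
  have hwin : ∀ n ∈ nodes, ∀ q, label n = Sum.inl q → S.win q n.length := by
    intro n
    induction n using List.reverseRecOn with
    | nil =>
      intro _ q hq
      have : A.init = q := by simpa [label] using hq
      exact this ▸ S.init
    | append_singleton n d ih =>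
      intro hn q hq
      obtain ⟨h1, s, h2, h3⟩ := (snoc n d).mp hn
      rw [label_snoc] at hq
      rw [hq] at h3
      simpa using S.next s _ (ih h1 s h2) q h3
  refine ⟨{
    nodes := nodes
    label := label
    root_mem := fun m d hm => by simp at hm
    prefix_closed := closed
    root_label := by simp [label]
    step := ?_
    lit_ok := ?_ }, ?_⟩
  · intro n hn q hq
    convert S.sat q _ (hwin n hn q hq) using 1
    ext x
    constructor
    · rintro ⟨d, h1, rfl⟩
      obtain ⟨-, s, h2, h3⟩ := (snoc n d).mp h1
      obtain rfl : q = s := Sum.inl.inj (hq.symm.trans h2)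
      rwa [label_snoc]
    · intro hx
      obtain ⟨d, rfl⟩ := hdec x
      exact ⟨d, (snoc n d).mpr ⟨hn, q, hq, hx⟩, label_snoc n d⟩
  · intro n
    induction n using List.reverseRecOn with
    | nil => intro _ l hl; simp [label] at hl
    | append_singleton n d _ =>
      intro hn l hl
      obtain ⟨h1, s, h2, h3⟩ := (snoc n d).mp hn
      rw [label_snoc] at hl
      rw [hl] at h3
      simpa using S.lit s _ (hwin n h1 s h2) l h3
  · intro b hb k
    change ∀ k, _ ∈ nodes at hb
    have hsucc : ∀ j, (List.ofFn fun i : Fin (j + 1) => b i) =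
        (List.ofFn fun i : Fin j => b i) ++ [b j] := fun j => by
      rw [List.ofFn_succ', List.concat_eq_append]; simp
    have hstate : ∀ j, ∃ q, label (List.ofFn fun i : Fin j => b i) = Sum.inl q ∧
        dec (b j) ∈ S.move q j := by
      intro j
      have := hb (j + 1)
      rw [hsucc, snoc] at this
      simpa using this.2
    choose q hq hmove using hstate
    have hmove' : ∀ j, Sum.inl (q (j + 1)) ∈ S.move (q j) j := by
      intro j
      have := hq (j + 1)
      rw [hsucc, label_snoc] at this
      exact this ▸ hmove j
    by_contra! hno
    -- Without accepting states from `k` on, the ranks along the branch descend forever.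
    refine not_strictAnti_of_wellFoundedLT (fun j => S.rk (q (k + j)) (k + j))
      (strictAnti_nat_of_succ_lt fun j => ?_)
    refine S.rk_lt _ _ ?_ _ (hmove' (k + j)) fun hacc =>
      hno (k + j) (Nat.le_add_right _ _) _ hacc (hq (k + j))
    simpa using hwin _ (hb (k + j)) _ (hq (k + j))

/-! ### Unfoldings from positional choices -/

/-- The edges out of a state vertex `(q, i)` when `Y q i` is the chosen assignment there. -/
def choiceEdge {V Q : Type} (Y : Q → ℕ → Set (Q ⊕ Lit V)) (a b : UVert V Q) : Prop :=
  ∃ q, a.1 = Sum.inl q ∧ b.1 ∈ Y q a.2 ∧ b.2 = a.2 + 1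

/-- The part of the graph of `choiceEdge` reachable from the initial vertex, as an existential
unfolding; minimality of `Y q i` is needed at the reachable vertices only. -/
def choiceUnfolding {V Q : Type} (A : ABA V Q) (Y : Q → ℕ → Set (Q ⊕ Lit V))
    (hY : ∀ q i, Relation.ReflTransGen (choiceEdge Y) (Sum.inl A.init, 0) (Sum.inl q, i) →
      Y q i ∈ (A.tr q).mSat) : ExUnfolding A where
  verts := {v | Relation.ReflTransGen (choiceEdge Y) (Sum.inl A.init, 0) v}
  edges := {e | Relation.ReflTransGen (choiceEdge Y) (Sum.inl A.init, 0) e.1 ∧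
    choiceEdge Y e.1 e.2}
  root_mem := .refl
  edges_sub := fun _ he => ⟨he.1, he.1.tail he.2⟩
  edge_shape := fun _ ⟨_, q, h1, _, h3⟩ => ⟨⟨q, h1⟩, h3⟩
  succ := by
    intro q i hv
    refine ⟨Y q i, hY q i hv, fun x hx => ?_, ?_⟩
    · have he : choiceEdge Y (Sum.inl q, i) (x, i + 1) := ⟨q, rfl, hx, rfl⟩
      exact ⟨hv.tail he, hv, he⟩
    · rintro u ⟨-, s, h1, h2, h3⟩
      obtain rfl : q = s := Sum.inl.inj h1
      exact ⟨h3, h2⟩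
  minimal := by
    intro v hv
    induction hv with
    | refl => exact .refl
    | tail h1 h2 ih => exact ih.tail ⟨h1, h2⟩

theorem langWithout_subset {V Q : Type} [Finite V] [Finite Q] [DecidableEq V] (A : ABA V Q)
    (p : V) (h : ExSyntacticCond A p) : (A.sExists p).langWithout p ⊆ A.existsLang p := by
  classical
  rintro w ⟨hw, hp⟩
  obtain ⟨S⟩ := exists_posStrat _ w hw
  have hchoice : ∀ q i, ∃ Y : Set (Q ⊕ Lit V), S.win q i → Y ∈ (A.tr q).mSat ∧
      ∀ x ∈ Y, (∃ c, x = Sum.inr (p, c)) ∨ (x ∈ S.move q i ∧ ∀ c, x ≠ Sum.inr (p, c)) := by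
    intro q i
    by_cases hq : S.win q i
    · obtain ⟨b, hb⟩ : ∃ b, (substP p b (A.tr q)).eval (S.move q i) := by
        rcases S.sat q i hq with h1 | h1
        · exact ⟨true, h1⟩
        · exact ⟨false, h1⟩
      obtain ⟨Y, hYX, hY⟩ := exists_mSat_subset _ _ (eval_of_eval_substP p b _ _ hb)
      refine ⟨Y, fun _ => ⟨hY, fun x hx => ?_⟩⟩
      rcases hYX hx with h1 | h1
      · exact Or.inr h1
      · exact Or.inl ⟨b, h1⟩
    · exact ⟨∅, fun h => absurd h hq⟩
  choose Y hY using hchoice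
  have hmove : ∀ q i, S.win q i → ∀ s, Sum.inl s ∈ Y q i → Sum.inl s ∈ S.move q i := by
    intro q i hq s hs
    rcases (hY q i hq).2 _ hs with ⟨c, hc⟩ | h1
    · simp at hc
    · exact h1.1
  have hwin : ∀ v, Relation.ReflTransGen (choiceEdge Y) (Sum.inl A.init, 0) v →
      ∀ q, v.1 = Sum.inl q → S.win q v.2 := by
    intro v hv
    induction hv with
    | refl =>
      intro q hq
      obtain rfl : A.init = q := Sum.inl.inj hq
      exact S.init
    | tail _ h2 ih =>
      intro q hq
      obtain ⟨s, h3, h4, h5⟩ := h2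
      rw [hq] at h4
      rw [h5]
      exact S.next s _ (ih s h3) q (hmove s _ (ih s h3) q h4)
  let U := choiceUnfolding A Y fun q i hv => (hY q i (hwin _ hv q rfl)).1
  -- The successors of timestep `i` live at timestep `i + 1` but read the letter `t i`.
  let t : Word V := fun i => w i ∪ {a | a = p ∧ (Sum.inr (p, true), i + 1) ∈ U.verts}
  have hstep : ∀ q i, (Sum.inl q, i) ∈ U.verts → ∀ x ∈ Y q i, (x, i + 1) ∈ U.verts :=
    fun q i hv x hx => Relation.ReflTransGen.tail hv ⟨q, rfl, hx, rfl⟩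
  have T : PosStrat A t := {
    win := fun q i => (Sum.inl q, i) ∈ U.verts
    move := Y
    rk := S.rk
    init := U.root_mem
    sat := fun q i hv => (hY q i (hwin _ hv q rfl)).1.1
    lit := by
      rintro q i hv ⟨a, c⟩ hl
      have hv' := hstep q i hv _ hl
      by_cases ha : a = p
      · subst ha
        cases c with
        | true => simp [litHolds, t, hv']
        | false =>
          have : (Sum.inr (a, true), i + 1) ∉ U.verts := fun ht => h U (i + 1) ⟨ht, hv'⟩
          simp [litHolds, t, this, hp i]
      · rcases (hY q i (hwin _ hv q rfl)).2 _ hl with ⟨d, hd⟩ | h1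
        · simp [ha] at hd
        · simpa [litHolds, t, ha] using S.lit q i (hwin _ hv q rfl) _ h1.1
    next := fun q i hv s hs => hstep q i hv _ hs
    rk_lt := fun q i hv s hs hq =>
      S.rk_lt q i (hwin _ hv q rfl) s (hmove q i (hwin _ hv q rfl) s hs) hq }
  refine ⟨t, T.mem_lang, ?_⟩
  funext i
  ext a
  by_cases ha : a = p
  · subst ha
    simp [projWord, hp i]
  · simp [projWord, t, ha]

/-- If an alternating Büchi automaton satisfies the existential syntactic
condition for `p` (no existential unfolding contains both `(p,i)` and `(¬p,i)`),
then it is in existential normal form for `p`. -/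
theorem exSyntacticCond_implies_existentialNF {V Q : Type} [Fintype V] [Fintype Q]
    [DecidableEq V] (A : ABA V Q) (p : V) (h : ExSyntacticCond A p) :
    ExistentialNF A p := by
  exact (langWithout_subset A p h).antisymm (existsLang_subset A p)

end ABAKC
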